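/- arXiv:2009.11302 — 2 statements merged into one kernel-verified Lean document; each statement's English description precedes it below -/
import Mathlib

section
/- The generalized robustness of nonclassicality of the single-mode squeezed vacuum state |ζ_r⟩ equals e^r for all r ≥ 0. -/
noncomputable section
open scoped ENNReal ComplexOrder
open Filter

variable {H : Type} [NormedAddCommGroup H] [InnerProductSpace ℂ H] [CompleteSpace H]

local notation "⟪" x ", " y "⟫" => @inner ℂ _ _ x y

/-- Bounded operators on `H`. -/
abbrev Op (H : Type) [NormedAddCommGroup H] [InnerProductSpace ℂ H] : Type := H →L[ℂ] H

/-- The rank-one projector `|ψ⟩⟨ψ|`. -/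
def projv (ψ : H) : Op H := (innerSL ℂ ψ).smulRight ψ

/-- The trace of an operator with respect to a Hilbert basis. -/
def trB {ι : Type} (e : HilbertBasis ι ℂ H) (T : Op H) : ℂ := ∑' n, ⟪e n, T (e n)⟫

/-- A density operator: positive, trace-class (summable diagonal), unit trace. -/
def IsDensity {ι : Type} (e : HilbertBasis ι ℂ H) (ρ : Op H) : Prop :=
  ρ.IsPositive ∧ Summable (fun n => (⟪e n, ρ (e n)⟫).re) ∧ trB e ρ = 1

/-- The trace norm `Tr |T| = Tr √(T†T)`. -/
def traceNorm {ι : Type} (e : HilbertBasis ι ℂ H) (T : Op H) : ℝ :=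
  ∑' n, (⟪e n, (CFC.sqrt (ContinuousLinearMap.adjoint T ∘L T)) (e n)⟫).re

/-- Sequential closure of a set of operators in the trace norm. -/
def tnClosure {ι : Type} (e : HilbertBasis ι ℂ H) (S : Set (Op H)) : Set (Op H) :=
  {T | ∃ u : ℕ → Op H, (∀ k, u k ∈ S) ∧
    Tendsto (fun k => traceNorm e (u k - T)) atTop (nhds 0)}

/-- The generalized robustness `R_F(ρ) = inf {1 + λ | (ρ + λτ)/(1+λ) ∈ F, τ a density operator}`. -/
def Robustness {ι : Type} (e : HilbertBasis ι ℂ H) (F : Set (Op H)) (ρ : Op H) : ℝ≥0∞ :=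
  sInf {r : ℝ≥0∞ | ∃ lam : ℝ, 0 ≤ lam ∧ ∃ τ : Op H, IsDensity e τ ∧
    ((1 + lam)⁻¹ : ℝ) • (ρ + lam • τ) ∈ F ∧ r = ENNReal.ofReal (1 + lam)}

/-- The coherent state `|α⟩ = e^{-|α|²/2} ∑ₘ (αᵐ/√m!) |m⟩` in the Fock basis `e`. -/
def coh (e : HilbertBasis ℕ ℂ H) (α : ℂ) : H :=
  ∑' m : ℕ, (Complex.exp (-((‖α‖ : ℂ) ^ 2 / 2)) * α ^ m / (Real.sqrt (Nat.factorial m) : ℂ)) • e m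

/-- The classical states: the trace-norm closed convex hull of coherent state projectors. -/
def ClassicalStates (e : HilbertBasis ℕ ℂ H) : Set (Op H) :=
  tnClosure e (convexHull ℝ {T : Op H | ∃ α : ℂ, T = projv (coh e α)})

/-- The squeezed vacuum `|ζ_r⟩ = e^{r(a² - a†²)/2}|0⟩`, via its Fock expansion
`|ζ_r⟩ = (cosh r)^{-1/2} ∑ₘ (-tanh r)ᵐ √(2m)!/(2ᵐ m!) |2m⟩`. -/
def sqVac (e : HilbertBasis ℕ ℂ H) (r : ℝ) : H :=
  ∑' m : ℕ, ((((-Real.tanh r) ^ m * Real.sqrt (Nat.factorial (2 * m)) /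
    (2 ^ m * (Nat.factorial m : ℝ))) / Real.sqrt (Real.cosh r) : ℝ) : ℂ) • e (2 * m)

/-!
Writing the squeezed vacuum as `e^{r/2} ∫ |iy⟩ dN(0, v)(y)` with `v = (e^{2r} - 1) / 2`, convexity
of the maps `ψ ↦ |⟨ψ|χ⟩|²` gives `|ζ_r⟩⟨ζ_r| ≤ e^r ∫ |iy⟩⟨iy| dN(0, v)(y)`. The
right-hand side is `e^r` times a classical state, so the robustness is at most `e^r`.

For the lower bound, `cosh t · |ζ_t⟩⟨ζ_t|` is a witness: its expectation is at most `1` in every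
coherent state, hence in every classical state, and equals `cosh t / cosh (t - r)` in `|ζ_r⟩`. This
ratio tends to `e^r` as `t → ∞`.
-/

section AbsoluteValue

variable {A : Type*} [CStarAlgebra A] [PartialOrder A] [StarOrderedRing A]

/- The contraction is `(|a| + ε)⁻¹ a⋆`, an approximate adjoint of the partial isometry in the polar
decomposition of `a`. -/
lemma exists_norm_le_one_norm_mul_sub_abs_le (a : A) {ε : ℝ} (hε : 0 < ε) :
    ∃ f : A, ‖f‖ ≤ 1 ∧ ‖f * a - CFC.abs a‖ ≤ ε := by
  set p := CFC.abs a
  have hspec : ∀ x ∈ spectrum ℝ p, 0 ≤ x := fun x hx =>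
    spectrum_nonneg_of_nonneg (CFC.abs_nonneg a) hx
  have hsa : IsSelfAdjoint p := (CFC.abs_nonneg a).isSelfAdjoint
  set g : ℝ → ℝ := fun x => (x + ε)⁻¹
  have hg : ContinuousOn g (spectrum ℝ p) :=
    ContinuousOn.inv₀ (by fun_prop) fun x hx => by linarith [hspec x hx]
  have hgx : ContinuousOn (fun x => g x * (x * x)) (spectrum ℝ p) := hg.mul (by fun_prop)
  have hfa : cfc g p * star a * a = cfc (fun x => g x * (x * x)) p := by
    rw [mul_assoc, ← CFC.abs_mul_abs, cfc_mul g _ p hg (by fun_prop),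
      cfc_mul (fun x => x) (fun x => x) p (by fun_prop) (by fun_prop), cfc_id' ℝ p]
  have hff : cfc g p * star a * star (cfc g p * star a) =
      cfc (fun x => g x * (x * x) * g x) p := by
    rw [star_mul, star_star, (cfc_predicate g p : IsSelfAdjoint _).star_eq, ← mul_assoc, hfa,
      cfc_mul (fun x => g x * (x * x)) g p hgx hg]
  have hsub : cfc g p * star a * a - p = cfc (fun x => g x * (x * x) - x) p := by
    rw [hfa, cfc_sub (fun x => g x * (x * x)) (fun x => x) p hgx (by fun_prop), cfc_id' ℝ p]
  refine ⟨cfc g p * star a, ?_, ?_⟩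
  · rw [← sq_le_one_iff₀ (norm_nonneg _), sq, ← CStarRing.norm_self_mul_star, hff]
    refine norm_cfc_le zero_le_one fun x hx => ?_
    have hx0 := hspec x hx
    have : g x * (x * x) * g x = (x / (x + ε)) ^ 2 := by simp only [g]; ring
    rw [this, Real.norm_of_nonneg (sq_nonneg _)]
    exact pow_le_one₀ (by positivity) (div_le_one_of_le₀ (by linarith) (by positivity))
  · rw [hsub]
    refine norm_cfc_le hε.le fun x hx => ?_
    have hx0 := hspec x hx
    have : g x * (x * x) - x = -(ε * (x / (x + ε))) := by simp only [g]; field_simp; ring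
    rw [this, norm_neg, Real.norm_of_nonneg (by positivity)]
    exact mul_le_of_le_one_right hε.le (div_le_one_of_le₀ (by linarith) (by positivity))

end AbsoluteValue

section TraceBound

open InnerProductSpace MeasureTheory

variable {ι : Type} {e : HilbertBasis ι ℂ H} {D D₁ D₂ : Op H} {C C₁ C₂ : ℝ}

/-- `HasTraceBound e D C` says that `D` is trace class with trace norm at most `C`. This is the dual
form `|Tr (f D)| ≤ C ‖f‖` of the bound, imposed on the finite partial sums of the trace in the basis
`e`, so that no summability has to be known beforehand. -/
structure HasTraceBound (e : HilbertBasis ι ℂ H) (D : Op H) (C : ℝ) : Prop where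
  nonneg : 0 ≤ C
  norm_sum_le : ∀ (f : Op H) (s : Finset ι), ‖∑ n ∈ s, ⟪e n, f (D (e n))⟫‖ ≤ C * ‖f‖

omit [CompleteSpace H] in
lemma norm_sum_inner_le_card_mul_norm (e : HilbertBasis ι ℂ H) (T : Op H) (s : Finset ι) :
    ‖∑ n ∈ s, ⟪e n, T (e n)⟫‖ ≤ s.card * ‖T‖ := by
  rw [← nsmul_eq_mul, ← Finset.sum_const]
  refine norm_sum_le_of_le s fun n _ => ?_
  have hT : ‖T (e n)‖ ≤ ‖T‖ := T.unit_le_opNorm _ (e.orthonormal.norm_eq_one n).le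
  simpa [e.orthonormal.norm_eq_one n] using (norm_inner_le_norm (e n) (T (e n))).trans
    (mul_le_mul_of_nonneg_left hT (norm_nonneg (e n)))

lemma inner_abs_nonneg (e : HilbertBasis ι ℂ H) (D : Op H) (n : ι) :
    0 ≤ (⟪e n, CFC.abs D (e n)⟫).re :=
  ((ContinuousLinearMap.nonneg_iff_isPositive _).1 (CFC.abs_nonneg D)).re_inner_nonneg_right (e n)

namespace HasTraceBound

omit [CompleteSpace H] in
lemma zero : HasTraceBound e 0 0 := ⟨le_rfl, fun f s => by simp⟩

omit [CompleteSpace H] in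
lemma add (h₁ : HasTraceBound e D₁ C₁) (h₂ : HasTraceBound e D₂ C₂) :
    HasTraceBound e (D₁ + D₂) (C₁ + C₂) := by
  refine ⟨add_nonneg h₁.nonneg h₂.nonneg, fun f s => ?_⟩
  simp only [add_apply, map_add, inner_add_right, Finset.sum_add_distrib,
    add_mul]
  exact norm_add_le_of_le (h₁.norm_sum_le f s) (h₂.norm_sum_le f s)

omit [CompleteSpace H] in
lemma smul (c : ℂ) (h : HasTraceBound e D C) : HasTraceBound e (c • D) (‖c‖ * C) := by
  refine ⟨mul_nonneg (norm_nonneg c) h.nonneg, fun f s => ?_⟩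
  simp only [smul_apply, map_smul, inner_smul_right, ← Finset.mul_sum,
    norm_mul, mul_assoc]
  exact mul_le_mul_of_nonneg_left (h.norm_sum_le f s) (norm_nonneg c)

omit [CompleteSpace H] in
lemma of_hasSum {κ : Type*} {F : κ → Op H} {c : κ → ℝ} (h : ∀ m, HasTraceBound e (F m) (c m))
    (hF : ∀ x, HasSum (fun m => F m x) (D x)) (hc : HasSum c C) : HasTraceBound e D C := by
  refine ⟨hc.nonneg fun m => (h m).nonneg, fun f s => ?_⟩
  have hsum : HasSum (fun m => ∑ n ∈ s, ⟪e n, f (F m (e n))⟫) (∑ n ∈ s, ⟪e n, f (D (e n))⟫) :=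
    hasSum_sum fun n _ => (hF (e n)).mapL ((innerSL ℂ (e n)).comp f)
  exact hsum.norm_le_of_bounded (hc.mul_right ‖f‖) fun m => (h m).norm_sum_le f s

lemma integral {X : Type*} [MeasurableSpace X] {μ : Measure X} {F : X → Op H} {c : X → ℝ}
    (h : ∀ x, HasTraceBound e (F x) (c x)) (hF : Integrable F μ) (hc : Integrable c μ) :
    HasTraceBound e (∫ x, F x ∂μ) (∫ x, c x ∂μ) := by
  refine ⟨integral_nonneg fun x => (h x).nonneg, fun f s => ?_⟩
  let L : Op H →L[ℂ] ℂ :=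
    ∑ n ∈ s, ((innerSL ℂ (e n)).comp f).comp (ContinuousLinearMap.apply ℂ H (e n))
  have hL : ∀ T, L T = ∑ n ∈ s, ⟪e n, f (T (e n))⟫ := fun T => by simp [L]
  rw [← hL, ← L.integral_comp_comm hF, ← integral_mul_const]
  refine norm_integral_le_of_norm_le (hc.mul_const _) (ae_of_all _ fun x => ?_)
  rw [hL]
  exact (h x).norm_sum_le f s

omit [CompleteSpace H] in
lemma rankOne (x y : H) : HasTraceBound e (rankOne ℂ x y) (‖x‖ * ‖y‖) := by
  refine ⟨by positivity, fun f s => ?_⟩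
  have hbessel : ∀ z : H, √(∑ n ∈ s, ‖⟪e n, z⟫‖ ^ 2) ≤ ‖z‖ := fun z =>
    Real.sqrt_le_left (norm_nonneg z) |>.2 (e.orthonormal.sum_inner_products_le z)
  calc ‖∑ n ∈ s, ⟪e n, f (InnerProductSpace.rankOne ℂ x y (e n))⟫‖
      ≤ ∑ n ∈ s, ‖⟪e n, y⟫‖ * ‖⟪e n, f x⟫‖ := by
        refine norm_sum_le_of_le s fun n _ => ?_
        rw [rankOne_apply, map_smul, inner_smul_right, norm_mul, norm_inner_symm]
    _ ≤ √(∑ n ∈ s, ‖⟪e n, y⟫‖ ^ 2) * √(∑ n ∈ s, ‖⟪e n, f x⟫‖ ^ 2) :=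
        Real.sum_mul_le_sqrt_mul_sqrt s _ _
    _ ≤ ‖y‖ * (‖f‖ * ‖x‖) := by
        gcongr
        · exact hbessel y
        · exact (hbessel (f x)).trans (f.le_opNorm x)
    _ = ‖x‖ * ‖y‖ * ‖f‖ := by ring

lemma of_isPositive (hD : D.IsPositive) (hC : HasSum (fun n => (⟪e n, D (e n)⟫).re) C) :
    HasTraceBound e D C := by
  set B : Op H := CFC.sqrt D
  have hB : B.IsPositive := (ContinuousLinearMap.nonneg_iff_isPositive B).1 (CFC.sqrt_nonneg D)
  have hBB : ∀ x, D x = B (B x) := fun x => by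
    rw [← mul_apply_eq_comp,
      CFC.sqrt_mul_sqrt_self D ((ContinuousLinearMap.nonneg_iff_isPositive D).2 hD)]
  refine of_hasSum (fun m => rankOne (B (e m)) (B (e m))) (fun x => ?_) (hC.congr_fun fun m => ?_)
  · simpa [rankOne_apply, hB.inner_left_eq_inner_right, e.repr_apply_apply, hBB] using
      (e.hasSum_repr (B x)).mapL B
  · rw [hBB, ← hB.inner_left_eq_inner_right, ← sq]
    exact (inner_self_eq_norm_sq (𝕜 := ℂ) _).symm

lemma abs (h : HasTraceBound e D C) : HasTraceBound e (CFC.abs D) C := by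
  refine ⟨h.nonneg, fun f s => le_of_forall_pos_le_add fun ε hε => ?_⟩
  set δ := ε / (s.card * ‖f‖ + 1)
  obtain ⟨g, hg, hgD⟩ : ∃ g : Op H, ‖g‖ ≤ 1 ∧ ‖g * D - CFC.abs D‖ ≤ δ :=
    exists_norm_le_one_norm_mul_sub_abs_le D (by positivity)
  calc ‖∑ n ∈ s, ⟪e n, f (CFC.abs D (e n))⟫‖
      = ‖∑ n ∈ s, ⟪e n, (f * g) (D (e n))⟫ -
          ∑ n ∈ s, ⟪e n, (f * (g * D - CFC.abs D)) (e n)⟫‖ := by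
        rw [← Finset.sum_sub_distrib]
        simp [mul_apply_eq_comp]
    _ ≤ C * ‖f * g‖ + s.card * ‖f * (g * D - CFC.abs D)‖ :=
        norm_sub_le_of_le (h.norm_sum_le _ s) (norm_sum_inner_le_card_mul_norm e _ s)
    _ ≤ C * ‖f * g‖ + s.card * (‖f‖ * δ) := by
        gcongr
        exact (norm_mul_le _ _).trans (by gcongr)
    _ ≤ C * ‖f‖ + ε := by
        have hfg : ‖f * g‖ ≤ ‖f‖ :=
          (norm_mul_le f g).trans (mul_le_of_le_one_right (norm_nonneg f) hg)
        have hδ : s.card * (‖f‖ * δ) ≤ ε := by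
          rw [← mul_assoc, mul_div_left_comm]
          exact mul_le_of_le_one_right hε.le
            (div_le_one_of_le₀ (le_add_of_nonneg_right zero_le_one) (by positivity))
        gcongr
        exact h.nonneg

omit [CompleteSpace H] in
lemma norm_inner_le (h : HasTraceBound e D C) (x y : H) : ‖⟪x, D y⟫‖ ≤ C * (‖y‖ * ‖x‖) := by
  have hsum : HasSum (fun n => ⟪e n, InnerProductSpace.rankOne ℂ y x (D (e n))⟫) ⟪x, D y⟫ := by
    simpa [rankOne_apply, inner_smul_right, e.repr_apply_apply, mul_comm] using
      (e.hasSum_repr y).mapL ((innerSL ℂ x).comp D)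
  rw [← norm_rankOne (𝕜 := ℂ) y x]
  exact le_of_tendsto hsum.norm (Eventually.of_forall fun s => h.norm_sum_le _ s)

omit [CompleteSpace H] in
lemma norm_le (h : HasTraceBound e D C) : ‖D‖ ≤ C := by
  refine D.opNorm_le_bound h.nonneg fun y => ?_
  have hself : ‖D y‖ * ‖D y‖ ≤ C * ‖y‖ * ‖D y‖ := by
    rw [← inner_self_eq_norm_mul_norm (𝕜 := ℂ), mul_assoc]
    exact (RCLike.re_le_norm _).trans (h.norm_inner_le (D y) y)
  rcases (norm_nonneg (D y)).eq_or_lt' with h0 | h0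
  · rw [h0]
    exact mul_nonneg h.nonneg (norm_nonneg y)
  · exact le_of_mul_le_mul_right hself h0

lemma sum_abs_le (h : HasTraceBound e D C) (s : Finset ι) :
    ∑ n ∈ s, (⟪e n, CFC.abs D (e n)⟫).re ≤ C := by
  have hid := h.abs.norm_sum_le (ContinuousLinearMap.id ℂ H) s
  rw [← Complex.re_sum]
  calc _ ≤ C * ‖ContinuousLinearMap.id ℂ H‖ := (Complex.re_le_norm _).trans hid
    _ ≤ C := mul_le_of_le_one_right h.nonneg ContinuousLinearMap.norm_id_le

lemma hasSum_abs (h : HasTraceBound e D C) :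
    HasSum (fun n => (⟪e n, CFC.abs D (e n)⟫).re) (traceNorm e D) :=
  (summable_of_sum_le (inner_abs_nonneg e D) h.sum_abs_le).hasSum

lemma traceNorm_le (h : HasTraceBound e D C) : traceNorm e D ≤ C :=
  Real.tsum_le_of_sum_le (inner_abs_nonneg e D) h.sum_abs_le

lemma norm_le_traceNorm (h : HasTraceBound e D C) : ‖D‖ ≤ traceNorm e D := by
  rw [← CFC.norm_abs (a := D)]
  exact (of_isPositive ((ContinuousLinearMap.nonneg_iff_isPositive _).1 (CFC.abs_nonneg D))
    h.hasSum_abs).norm_le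

end HasTraceBound

end TraceBound

section TraceClass

variable {ι : Type} {e : HilbertBasis ι ℂ H}

/-- The subspace of trace-class operators, those with a finite trace norm in the sense of
`HasTraceBound`. -/
def traceClass (e : HilbertBasis ι ℂ H) : Submodule ℂ (Op H) where
  carrier := {D | ∃ C, HasTraceBound e D C}
  zero_mem' := ⟨0, .zero⟩
  add_mem' := fun ⟨_, h₁⟩ ⟨_, h₂⟩ => ⟨_, h₁.add h₂⟩
  smul_mem' := fun c _ ⟨_, h⟩ => ⟨_, h.smul c⟩

omit [CompleteSpace H] in
lemma projv_mem_traceClass (ψ : H) : projv ψ ∈ traceClass e := ⟨_, .rankOne ψ ψ⟩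

omit [CompleteSpace H] in
lemma hasTraceBound_projv_sub_projv (a b : H) :
    HasTraceBound e (projv a - projv b) ((‖a‖ + ‖b‖) * ‖a - b‖) := by
  have hsplit : projv a - projv b =
      InnerProductSpace.rankOne ℂ a (a - b) + InnerProductSpace.rankOne ℂ (a - b) b := by
    ext x
    simp [projv]
  rw [hsplit, add_mul, mul_comm ‖b‖]
  exact (HasTraceBound.rankOne a (a - b)).add (.rankOne (a - b) b)

omit [CompleteSpace H] in
lemma isPositive_projv (ψ : H) : (projv ψ).IsPositive :=
  InnerProductSpace.isPositive_rankOne_self ψ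

omit [CompleteSpace H] in
lemma inner_projv_self (ψ x : H) : ⟪x, projv ψ x⟫ = ((‖⟪ψ, x⟫‖ ^ 2 : ℝ) : ℂ) := by
  change ⟪x, ⟪ψ, x⟫ • ψ⟫ = _
  rw [inner_smul_right, ← inner_conj_symm x ψ, Complex.mul_conj']
  push_cast; rfl

lemma traceNorm_nonneg (e : HilbertBasis ι ℂ H) (D : Op H) : 0 ≤ traceNorm e D :=
  tsum_nonneg (inner_abs_nonneg e D)

lemma re_inner_le_of_mem_tnClosure {S : Set (Op H)} {T : Op H} {ψ : H} {c : ℝ}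
    (hS : ∀ A ∈ S, A ∈ traceClass e ∧ (⟪ψ, A ψ⟫).re ≤ c) (hT : T ∈ traceClass e)
    (h : T ∈ tnClosure e S) : (⟪ψ, T ψ⟫).re ≤ c := by
  obtain ⟨u, huS, hu⟩ := h
  have hnorm : Tendsto u atTop (nhds T) := by
    refine tendsto_iff_norm_sub_tendsto_zero.2
      (squeeze_zero (fun k => norm_nonneg _) (fun k => ?_) hu)
    obtain ⟨C, hC⟩ := (traceClass e).sub_mem (hS _ (huS k)).1 hT
    exact hC.norm_le_traceNorm
  have hlim : Tendsto (fun k => (⟪ψ, u k ψ⟫).re) atTop (nhds (⟪ψ, T ψ⟫).re) :=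
    (Continuous.tendsto (by fun_prop : Continuous fun A : Op H => (⟪ψ, A ψ⟫).re) T).comp hnorm
  exact le_of_tendsto' hlim fun k => (hS _ (huS k)).2

omit [CompleteSpace H] in
lemma mem_traceClass_and_re_inner_le_of_mem_convexHull {S : Set (Op H)} {ψ : H} {c : ℝ}
    (hS : ∀ A ∈ S, A ∈ traceClass e ∧ (⟪ψ, A ψ⟫).re ≤ c) :
    ∀ A ∈ convexHull ℝ S, A ∈ traceClass e ∧ (⟪ψ, A ψ⟫).re ≤ c := by
  have hconv : Convex ℝ {A : Op H | (⟪ψ, A ψ⟫).re ≤ c} :=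
    convex_halfSpace_le (f := fun A : Op H => (⟪ψ, A ψ⟫).re)
      ⟨by simp, by simp⟩ c
  exact fun A hA => convexHull_min hS (((traceClass e).restrictScalars ℝ).convex.inter hconv) hA

end TraceClass

section Robustness

variable {ι : Type} {e : HilbertBasis ι ℂ H} {ρ σ : Op H}

omit [CompleteSpace H] in
lemma isDensity_iff : IsDensity e ρ ↔ ρ.IsPositive ∧ HasSum (fun n => ⟪e n, ρ (e n)⟫) 1 := by
  refine and_congr_right fun hρ => ⟨fun ⟨hsum, htr⟩ => ?_, fun h => ⟨?_, h.tsum_eq⟩⟩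
  · have hre : ∀ n, (((⟪e n, ρ (e n)⟫).re : ℝ) : ℂ) = ⟪e n, ρ (e n)⟫ := fun n =>
      Complex.eq_coe_norm_of_nonneg (hρ.inner_nonneg_right (e n)) ▸ by simp
    rw [← htr]
    exact ((Complex.hasSum_ofReal.2 hsum.hasSum).summable.congr hre).hasSum
  · exact (Complex.hasSum_re h).summable

omit [CompleteSpace H] in
lemma isDensity_projv {ψ : H} (hψ : ‖ψ‖ = 1) : IsDensity e (projv ψ) := by
  refine isDensity_iff.2 ⟨isPositive_projv ψ, ?_⟩
  have hparseval := e.hasSum_inner_mul_inner ψ ψ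
  rw [inner_self_eq_norm_sq_to_K, hψ, RCLike.ofReal_one, one_pow] at hparseval
  exact hparseval.congr_fun fun n => inner_smul_right (e n) ψ ⟪ψ, e n⟫

lemma IsDensity.mem_traceClass (h : IsDensity e ρ) : ρ ∈ traceClass e :=
  ⟨_, .of_isPositive h.1 h.2.1.hasSum⟩

lemma ofReal_div_le_robustness {F : Set (Op H)} {ψ : H} {c : ℝ} (hc : 0 < c)
    (hρ : ρ ∈ traceClass e) (hF : ∀ A ∈ F, A ∈ traceClass e → (⟪ψ, A ψ⟫).re ≤ c) :
    ENNReal.ofReal ((⟪ψ, ρ ψ⟫).re / c) ≤ Robustness e F ρ := by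
  refine le_sInf ?_
  rintro _ ⟨lam, hlam, τ, hτ, hmem, rfl⟩
  refine ENNReal.ofReal_le_ofReal ((div_le_iff₀ hc).2 ?_)
  have htc : ((1 + lam)⁻¹ : ℝ) • (ρ + lam • τ) ∈ traceClass e :=
    (traceClass e).smul_of_tower_mem _
      ((traceClass e).add_mem hρ ((traceClass e).smul_of_tower_mem _ hτ.mem_traceClass))
  have hle := hF _ hmem htc
  have hτψ : 0 ≤ (⟪ψ, τ ψ⟫).re := hτ.1.re_inner_nonneg_right ψ
  have hexpand : (⟪ψ, (((1 + lam)⁻¹ : ℝ) • (ρ + lam • τ)) ψ⟫).re =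
      ((⟪ψ, ρ ψ⟫).re + lam * (⟪ψ, τ ψ⟫).re) / (1 + lam) := by
    simp only [smul_apply, add_apply, inner_add_right, inner_smul_right_eq_smul, Complex.add_re,
      Complex.smul_re, smul_eq_mul, div_eq_inv_mul]
  rw [hexpand, div_le_iff₀ (by positivity)] at hle
  linarith [mul_nonneg hlam hτψ]

lemma IsDensity.inv_smul_smul_sub {ν : ℝ} (hρ : IsDensity e ρ) (hσ : IsDensity e σ) (hν : 1 < ν)
    (hle : ρ ≤ ν • σ) : IsDensity e ((ν - 1)⁻¹ • (ν • σ - ρ)) := by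
  have hν1 : 0 < ν - 1 := sub_pos.2 hν
  refine isDensity_iff.2 ⟨?_, ?_⟩
  · rw [← ContinuousLinearMap.nonneg_iff_isPositive]
    exact smul_nonneg (inv_nonneg.2 hν1.le) (sub_nonneg.2 hle)
  · have htr := (((isDensity_iff.1 hσ).2.const_smul ν).sub (isDensity_iff.1 hρ).2).const_smul
      (ν - 1)⁻¹
    have hone : (ν - 1)⁻¹ • (ν • (1 : ℂ) - 1) = 1 := by
      rw [Complex.real_smul, Complex.real_smul, mul_one]
      exact_mod_cast inv_mul_cancel₀ hν1.ne'
    rw [hone] at htr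
    simpa only [smul_apply, sub_apply, inner_sub_right, inner_smul_right_eq_smul] using htr

/- For `ν > μ` the operator `(ν σ - ρ) / (ν - 1)` is a density operator mixing `ρ` to `σ`; the limit
`ν → μ` covers `μ = 1`, where this quotient makes no sense. -/
lemma robustness_le_ofReal {F : Set (Op H)} {μ : ℝ} (hρ : IsDensity e ρ) (hσ : IsDensity e σ)
    (hF : σ ∈ F) (hμ : 1 ≤ μ) (hle : ρ ≤ μ • σ) : Robustness e F ρ ≤ ENNReal.ofReal μ := by
  have hlim : Tendsto ENNReal.ofReal (nhdsWithin μ (Set.Ioi μ)) (nhds (ENNReal.ofReal μ)) :=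
    (ENNReal.continuous_ofReal.tendsto μ).mono_left nhdsWithin_le_nhds
  refine ge_of_tendsto hlim (eventually_nhdsWithin_of_forall fun ν (hν : μ < ν) => ?_)
  have hν1 : 0 < ν - 1 := by linarith
  have hσ0 : 0 ≤ σ := (ContinuousLinearMap.nonneg_iff_isPositive σ).2 hσ.1
  have hleν : ρ ≤ ν • σ := hle.trans (smul_le_smul_of_nonneg_right hν.le hσ0)
  refine sInf_le ⟨ν - 1, hν1.le, (ν - 1)⁻¹ • (ν • σ - ρ),
    hρ.inv_smul_smul_sub hσ (hμ.trans_lt hν) hleν, ?_, by rw [add_sub_cancel]⟩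
  rwa [smul_inv_smul₀ hν1.ne', add_sub_cancel, add_sub_cancel, inv_smul_smul₀ (by linarith)]

end Robustness

section Mixture

open MeasureTheory

variable {X : Type*} [MeasurableSpace X] {μ : Measure X} {φ : X → H}

omit [CompleteSpace H] in
lemma continuous_projv : Continuous (projv : H → Op H) := by
  unfold projv
  fun_prop

omit [CompleteSpace H] in
lemma integrable_projv [IsFiniteMeasure μ] (hφ : StronglyMeasurable φ) (hnorm : ∀ x, ‖φ x‖ = 1) :
    Integrable (fun x => projv (φ x)) μ := by
  refine .of_bound (continuous_projv.comp_stronglyMeasurable hφ).aestronglyMeasurable 1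
    (ae_of_all _ fun x => ?_)
  change ‖InnerProductSpace.rankOne ℂ (φ x) (φ x)‖ ≤ 1
  rw [InnerProductSpace.norm_rankOne, hnorm, one_mul]

lemma inner_integral_apply {F : X → Op H} (hF : Integrable F μ) (x y : H) :
    ⟪x, (∫ t, F t ∂μ) y⟫ = ∫ t, ⟪x, F t y⟫ ∂μ := by
  rw [ContinuousLinearMap.integral_apply hF, integral_inner (hF.apply_continuousLinearMap y)]

lemma isPositive_integral {F : X → Op H} (h : ∀ x, (F x).IsPositive) :
    (∫ x, F x ∂μ).IsPositive := by
  rw [← ContinuousLinearMap.nonneg_iff_isPositive]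
  exact integral_nonneg fun x => (ContinuousLinearMap.nonneg_iff_isPositive _).2 (h x)

lemma exists_simpleFunc_tendsto_integral_norm_sub {E : Type*} [NormedAddCommGroup E]
    [IsFiniteMeasure μ] [Nonempty X] {φ : X → E} (hφ : StronglyMeasurable φ)
    (hint : Integrable φ μ) :
    ∃ s : ℕ → SimpleFunc X E, (∀ k x, s k x ∈ Set.range φ) ∧
      Tendsto (fun k => ∫ x, ‖s k x - φ x‖ ∂μ) atTop (nhds 0) := by
  borelize E
  have : TopologicalSpace.SeparableSpace (Set.range φ) := hφ.isSeparable_range.separableSpace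
  obtain ⟨x₀⟩ := ‹Nonempty X›
  refine ⟨SimpleFunc.approxOn φ hφ.measurable (Set.range φ) (φ x₀) (Set.mem_range_self x₀),
    SimpleFunc.approxOn_mem hφ.measurable _, ?_⟩
  have hlim := SimpleFunc.tendsto_approxOn_L1_enorm (μ := μ) hφ.measurable
    (Set.mem_range_self x₀)
    (ae_of_all _ fun x => subset_closure (Set.mem_range_self x))
    (hint.sub (integrable_const (φ x₀))).hasFiniteIntegral
  refine ((ENNReal.tendsto_toReal ENNReal.zero_ne_top).comp hlim).congr fun k => ?_
  exact (integral_norm_eq_lintegral_enorm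
    ((SimpleFunc.aestronglyMeasurable _).sub hφ.aestronglyMeasurable)).symm

variable [IsProbabilityMeasure μ]

lemma isDensity_integral {ι : Type} [Countable ι] {e : HilbertBasis ι ℂ H} {F : X → Op H}
    (hF : Integrable F μ) (h : ∀ x, IsDensity e (F x)) : IsDensity e (∫ x, F x ∂μ) := by
  refine isDensity_iff.2 ⟨?_, ?_⟩
  · exact isPositive_integral fun x => (h x).1
  · have htrace (x : X) : HasSum (fun n => ⟪e n, F x (e n)⟫) 1 := (isDensity_iff.1 (h x)).2
    have htrace_norm (x : X) : HasSum (fun n => ‖⟪e n, F x (e n)⟫‖) 1 := by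
      refine (Complex.hasSum_re (htrace x)).congr_fun fun n => ?_
      exact (Complex.re_eq_norm.2 ((h x).1.inner_nonneg_right (e n))).symm
    simp_rw [inner_integral_apply hF]
    have hone : ∫ _ : X, (1 : ℂ) ∂μ = 1 := by simp
    rw [← hone]
    refine hasSum_integral_of_dominated_convergence (fun n x => ‖⟪e n, F x (e n)⟫‖)
      (fun n => ((hF.apply_continuousLinearMap (e n)).const_inner (e n)).aestronglyMeasurable)
      (fun n => ae_of_all _ fun x => le_rfl) (ae_of_all _ fun x => (htrace_norm x).summable)
      ?_ (ae_of_all _ htrace)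
    simp_rw [(htrace_norm _).tsum_eq]
    exact integrable_const 1

lemma projv_integral_le_integral_projv (hφ : Integrable φ μ)
    (hproj : Integrable (fun x => projv (φ x)) μ) :
    projv (∫ x, φ x ∂μ) ≤ ∫ x, projv (φ x) ∂μ := by
  have hquad (T : Op H) (y : H) : T.reApplyInnerSelf y = (⟪y, T y⟫).re := by
    rw [ContinuousLinearMap.reApplyInnerSelf_apply]; exact inner_re_symm (𝕜 := ℂ) _ _
  have hpos := isPositive_integral (μ := μ) fun x => isPositive_projv (φ x)
  refine (ContinuousLinearMap.le_def _ _).2 ⟨hpos.1.sub (isPositive_projv _).1, fun y => ?_⟩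
  have hconv : ConvexOn ℝ Set.univ fun ψ : H => ‖⟪ψ, y⟫‖ ^ 2 := by
    simp_rw [norm_inner_symm _ y]
    exact ((convexOn_univ_norm (E := ℂ)).pow (fun _ _ => norm_nonneg _) 2).comp_linearMap
      ((innerSL ℂ y).toLinearMap.restrictScalars ℝ)
  have hsq : Integrable (fun x => ‖⟪φ x, y⟫‖ ^ 2) μ := by
    simpa only [inner_projv_self, RCLike.re_eq_complex_re, Complex.ofReal_re] using
      ((hproj.apply_continuousLinearMap y).const_inner (𝕜 := ℂ) y).re
  have hjensen : ‖⟪∫ x, φ x ∂μ, y⟫‖ ^ 2 ≤ ∫ x, ‖⟪φ x, y⟫‖ ^ 2 ∂μ :=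
    hconv.map_integral_le (by fun_prop) isClosed_univ (by simp) hφ hsq
  simp_rw [hquad, sub_apply, inner_sub_right, inner_integral_apply hproj, inner_projv_self]
  rw [integral_complex_ofReal, ← Complex.ofReal_sub, Complex.ofReal_re]
  exact sub_nonneg.2 hjensen

/- The mixture is approximated by those of the simple functions with values in the range of `φ`,
which are finite convex combinations. -/
lemma integral_projv_mem_tnClosure {ι : Type} (e : HilbertBasis ι ℂ H) {S : Set (Op H)}
    (hφ : StronglyMeasurable φ) (hnorm : ∀ x, ‖φ x‖ = 1) (hS : ∀ x, projv (φ x) ∈ S) :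
    ∫ x, projv (φ x) ∂μ ∈ tnClosure e (convexHull ℝ S) := by
  have hint : Integrable φ μ :=
    .of_bound hφ.aestronglyMeasurable 1 (ae_of_all _ fun x => (hnorm x).le)
  have : Nonempty X := μ.nonempty_of_neZero
  obtain ⟨s, hs, hlim⟩ := exists_simpleFunc_tendsto_integral_norm_sub hφ hint
  have hs_norm (k : ℕ) (x : X) : ‖s k x‖ = 1 := by
    obtain ⟨y, hy⟩ := hs k x
    rw [← hy, hnorm]
  have hs_int (k : ℕ) : Integrable (fun x => projv (s k x)) μ :=
    integrable_projv (s k).stronglyMeasurable (hs_norm k)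
  refine ⟨fun k => ∫ x, projv (s k x) ∂μ, fun k => ?_, ?_⟩
  · refine convexHull_mono (Set.range_subset_iff.2 fun x => ?_) <|
      (convex_convexHull ℝ _).integral_mem
        (((s k).map projv).finite_range.isClosed_convexHull ℝ)
        (ae_of_all _ fun x => subset_convexHull ℝ _ (Set.mem_range_self x)) (hs_int k)
    obtain ⟨y, hy⟩ := hs k x
    simpa [← hy] using hS y
  · have htrace (k : ℕ) (x : X) :
        HasTraceBound e (projv (s k x) - projv (φ x)) (2 * ‖s k x - φ x‖) := by
      simpa [hs_norm, hnorm, one_add_one_eq_two] using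
        hasTraceBound_projv_sub_projv (e := e) (s k x) (φ x)
    have hbound (k : ℕ) : traceNorm e (∫ x, projv (s k x) ∂μ - ∫ x, projv (φ x) ∂μ) ≤
        2 * ∫ x, ‖s k x - φ x‖ ∂μ := by
      rw [← integral_sub (hs_int k) (integrable_projv hφ hnorm), ← integral_const_mul]
      exact (HasTraceBound.integral (htrace k) ((hs_int k).sub (integrable_projv hφ hnorm))
        (((s k).integrable_of_isFiniteMeasure.sub hint).norm.const_mul 2)).traceNorm_le
    exact squeeze_zero (fun k => traceNorm_nonneg e _) hbound (by simpa using hlim.const_mul 2)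

end Mixture

section CoherentStates

omit [CompleteSpace H] in
lemma inner_tsum_smul {ι : Type*} (e : HilbertBasis ι ℂ H) {c : ι → ℂ}
    (hc : Summable fun n => ‖c n‖ ^ 2) (n : ι) : ⟪e n, ∑' m, c m • e m⟫ = c n := by
  let f : lp (fun _ : ι => ℂ) 2 := ⟨c, memℓp_gen (by simpa using hc)⟩
  have hsum : ∑' m, c m • e m = e.repr.symm f := (e.hasSum_repr_symm f).tsum_eq
  rw [hsum, ← e.repr_apply_apply, LinearIsometryEquiv.apply_symm_apply]

/-- The Fock coefficient `⟨m|α⟩` of the coherent state `|α⟩`. -/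
def cohCoeff (α : ℂ) (m : ℕ) : ℂ :=
  Complex.exp (-((‖α‖ : ℂ) ^ 2 / 2)) * α ^ m / (Real.sqrt (Nat.factorial m) : ℂ)

lemma hasSum_conj_cohCoeff_mul_cohCoeff (α β : ℂ) :
    HasSum (fun m => (starRingEnd ℂ) (cohCoeff α m) * cohCoeff β m)
      (Complex.exp (-((‖α‖ : ℂ) ^ 2 / 2)) * Complex.exp (-((‖β‖ : ℂ) ^ 2 / 2)) *
        Complex.exp ((starRingEnd ℂ) α * β)) := by
  have hexp := (NormedSpace.expSeries_div_hasSum_exp ((starRingEnd ℂ) α * β)).mul_left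
    (Complex.exp (-((‖α‖ : ℂ) ^ 2 / 2)) * Complex.exp (-((‖β‖ : ℂ) ^ 2 / 2)))
  rw [← Complex.exp_eq_exp_ℂ] at hexp
  refine hexp.congr_fun fun m => ?_
  have hsq : (Real.sqrt (Nat.factorial m) : ℂ) ^ 2 = (Nat.factorial m : ℂ) := by
    norm_cast
    rw [Real.sq_sqrt (by positivity)]
  simp only [cohCoeff, ← hsq, map_div₀, map_mul, map_pow, map_neg, Complex.conj_ofReal,
    Complex.conj_ofNat, ← Complex.exp_conj, mul_pow]
  ring

lemma hasSum_norm_cohCoeff_sq (α : ℂ) : HasSum (fun m => ‖cohCoeff α m‖ ^ 2) 1 := by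
  rw [← Complex.hasSum_ofReal]
  convert hasSum_conj_cohCoeff_mul_cohCoeff α α using 1
  · simp [Complex.conj_mul']
  · rw [Complex.conj_mul', ← Complex.exp_add, ← Complex.exp_add, ← neg_add, add_halves,
      neg_add_cancel, Complex.exp_zero, Complex.ofReal_one]

variable (e : HilbertBasis ℕ ℂ H)

omit [CompleteSpace H] in
lemma inner_basis_coh (α : ℂ) (m : ℕ) : ⟪e m, coh e α⟫ = cohCoeff α m :=
  inner_tsum_smul e (hasSum_norm_cohCoeff_sq α).summable m

omit [CompleteSpace H] in
lemma inner_coh_coh (α β : ℂ) : ⟪coh e α, coh e β⟫ =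
    Complex.exp (-((‖α‖ : ℂ) ^ 2 / 2)) * Complex.exp (-((‖β‖ : ℂ) ^ 2 / 2)) *
      Complex.exp ((starRingEnd ℂ) α * β) := by
  have hparseval := e.hasSum_inner_mul_inner (coh e α) (coh e β)
  simp_rw [← inner_conj_symm (coh e α) (e _), inner_basis_coh] at hparseval
  exact hparseval.unique (hasSum_conj_cohCoeff_mul_cohCoeff α β)

omit [CompleteSpace H] in
lemma norm_coh (α : ℂ) : ‖coh e α‖ = 1 := by
  have hone : HasSum (fun m => (starRingEnd ℂ) (cohCoeff α m) * cohCoeff α m) 1 := by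
    simpa [Complex.conj_mul'] using Complex.hasSum_ofReal.2 (hasSum_norm_cohCoeff_sq α)
  have hinner : ⟪coh e α, coh e α⟫ = 1 :=
    (inner_coh_coh e α α).trans ((hasSum_conj_cohCoeff_mul_cohCoeff α α).unique hone)
  rw [inner_self_eq_norm_sq_to_K] at hinner
  have hsq : ‖coh e α‖ ^ 2 = 1 := Complex.ofReal_injective (by simpa using hinner)
  exact (pow_eq_one_iff_of_nonneg (norm_nonneg _) two_ne_zero).1 hsq

omit [CompleteSpace H] in
lemma continuous_coh : Continuous (coh e) := by
  refine continuous_iff_continuousAt.2 fun α => tendsto_iff_norm_sub_tendsto_zero.2 ?_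
  have hdist (β : ℂ) : ‖coh e β - coh e α‖ = √(2 - 2 * (⟪coh e β, coh e α⟫).re) := by
    rw [← Real.sqrt_sq (norm_nonneg (coh e β - coh e α)), norm_sub_sq (𝕜 := ℂ), norm_coh, norm_coh,
      RCLike.re_eq_complex_re]
    ring_nf
  have hcont : Continuous fun β => √(2 - 2 * (⟪coh e β, coh e α⟫).re) := by
    simp_rw [inner_coh_coh]
    fun_prop
  simp_rw [hdist]
  simpa [inner_self_eq_norm_sq_to_K, norm_coh] using hcont.tendsto α

end CoherentStates

section Gaussian

open MeasureTheory ProbabilityTheory NNReal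

lemma gaussianPDFReal_mul_exp_neg_mul_sq {v : ℝ≥0} (hv : v ≠ 0) (c : ℝ≥0) (y : ℝ) :
    gaussianPDFReal 0 v y * Real.exp (-(c / 2) * y ^ 2) =
      (√(1 + c * v))⁻¹ * gaussianPDFReal 0 (v / (1 + c * v)) y := by
  have : (0 : ℝ) < v := NNReal.coe_pos.2 (pos_iff_ne_zero.2 hv)
  have hsqrt : √(2 * Real.pi * v) = √(1 + c * v) * √(2 * Real.pi * (v / (1 + c * v))) := by
    rw [← Real.sqrt_mul (by positivity)]
    congr 1
    field_simp
  have hexp : -(y - 0) ^ 2 / (2 * v) + -(c / 2) * y ^ 2 =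
      -(y - 0) ^ 2 / (2 * (v / (1 + c * v)) : ℝ) := by
    field_simp
    ring
  simp only [gaussianPDFReal, NNReal.coe_div, NNReal.coe_add, NNReal.coe_one, NNReal.coe_mul]
  rw [mul_assoc, ← Real.exp_add, hexp, hsqrt, mul_inv, mul_assoc]

/- Multiplying a centred Gaussian density by `exp (-c y² / 2)` increases its precision `1 / v` by
`c`. -/
lemma integral_exp_neg_mul_sq_smul_gaussianReal {E : Type*} [NormedAddCommGroup E]
    [NormedSpace ℝ E] [CompleteSpace E] (v c : ℝ≥0) (g : ℝ → E) :
    ∫ y, Real.exp (-(c / 2) * y ^ 2) • g y ∂(gaussianReal 0 v) =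
      (√(1 + c * v))⁻¹ • ∫ y, g y ∂(gaussianReal 0 (v / (1 + c * v))) := by
  rcases eq_or_ne v 0 with rfl | hv
  · simp
  · have hw : v / (1 + c * v) ≠ 0 := div_ne_zero hv (by positivity)
    rw [integral_gaussianReal_eq_integral_smul hv, integral_gaussianReal_eq_integral_smul hw,
      ← integral_smul]
    simp_rw [smul_smul, gaussianPDFReal_mul_exp_neg_mul_sq hv]

lemma integral_pow_mul_exp_neg_mul_sq {b : ℝ} (hb : 0 < b) (k : ℕ) :
    ∫ y : ℝ, y ^ (2 * k) * Real.exp (-b * y ^ 2) =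
      √(Real.pi / b) * (2 * k - 1).doubleFactorial / (2 * b) ^ k := by
  have habs := integral_comp_abs (f := fun x : ℝ => x ^ (2 * k) * Real.exp (-b * x ^ 2))
  simp only [(even_two_mul k).pow_abs, sq_abs] at habs
  have hgamma := integral_rpow_mul_exp_neg_mul_rpow (p := 2) (q := 2 * k) two_pos
    (neg_one_lt_zero.trans_le (by positivity)) hb
  have hhalf : (2 * (k : ℝ) + 1) / 2 = k + 1 / 2 := by ring
  rw [neg_div, hhalf, Real.Gamma_nat_add_half, Real.rpow_neg hb.le, Real.rpow_add hb,
    ← Real.sqrt_eq_rpow, Real.rpow_natCast] at hgamma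
  have hpow (x : ℝ) : x ^ (2 * (k : ℝ)) = x ^ (2 * k) := by
    rw [← Real.rpow_natCast]
    push_cast
    rfl
  simp only [hpow, Real.rpow_two] at hgamma
  rw [habs, hgamma, Real.sqrt_div Real.pi_pos.le, mul_pow]
  field_simp

lemma integral_pow_two_mul_gaussianReal (v : ℝ≥0) (k : ℕ) :
    ∫ y, y ^ (2 * k) ∂(gaussianReal 0 v) = v ^ k * (2 * k - 1).doubleFactorial := by
  rcases eq_or_ne v 0 with rfl | hv
  · cases k <;> simp
  · have : (0 : ℝ) < v := NNReal.coe_pos.2 (pos_iff_ne_zero.2 hv)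
    have hmoment := integral_pow_mul_exp_neg_mul_sq (b := (2 * (v : ℝ))⁻¹) (by positivity) k
    have hdensity (y : ℝ) : gaussianPDFReal 0 v y • y ^ (2 * k) =
        (√(2 * Real.pi * v))⁻¹ * (y ^ (2 * k) * Real.exp (-(2 * (v : ℝ))⁻¹ * y ^ 2)) := by
      have hexp : -(y - 0) ^ 2 / (2 * v) = -(2 * (v : ℝ))⁻¹ * y ^ 2 := by ring
      rw [gaussianPDFReal, hexp, smul_eq_mul, mul_assoc, mul_comm (Real.exp _)]
    have hpi : Real.pi / (2 * (v : ℝ))⁻¹ = 2 * Real.pi * v := by field_simp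
    have htwo : 2 * (2 * (v : ℝ))⁻¹ = (v : ℝ)⁻¹ := by field_simp
    rw [integral_gaussianReal_eq_integral_smul hv]
    simp_rw [hdensity]
    rw [integral_const_mul, hmoment, hpi, htwo, inv_pow]
    have : 0 < √(2 * Real.pi * v) := by positivity
    field_simp

lemma integral_pow_two_mul_add_one_gaussianReal (v : ℝ≥0) (k : ℕ) :
    ∫ y, y ^ (2 * k + 1) ∂(gaussianReal 0 v) = 0 := by
  have hneg : ∫ y, y ^ (2 * k + 1) ∂(gaussianReal 0 v) =
      ∫ y, (-y) ^ (2 * k + 1) ∂(gaussianReal 0 v) := by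
    conv_lhs => rw [← neg_zero, ← gaussianReal_map_neg]
    exact integral_map_equiv (MeasurableEquiv.neg ℝ) _
  simp_rw [(odd_two_mul_add_one k).neg_pow, integral_neg] at hneg
  exact self_eq_neg.1 hneg

end Gaussian

section SqueezedVacuum

open MeasureTheory ProbabilityTheory NNReal

/-- The variance `(e^{2r} - 1) / 2` of the Gaussian superposition of the coherent states `|iy⟩` that
represents the squeezed vacuum, meant for `r ≥ 0`. -/
def sqVacVariance (r : ℝ) : ℝ≥0 := (Real.exp r * Real.sinh r).toNNReal

lemma factorial_two_mul_eq_doubleFactorial_mul (k : ℕ) :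
    (2 * k).factorial = (2 * k - 1).doubleFactorial * (2 ^ k * k.factorial) := by
  rw [← Nat.doubleFactorial_two_mul]
  cases k with
  | zero => rfl
  | succ k => exact (Nat.factorial_eq_mul_doubleFactorial (2 * k + 1)).trans (mul_comm _ _)

variable {r t : ℝ}

lemma coe_sqVacVariance (hr : 0 ≤ r) : (sqVacVariance r : ℝ) = Real.exp r * Real.sinh r :=
  Real.coe_toNNReal _ (mul_nonneg (Real.exp_pos r).le (Real.sinh_nonneg_iff.2 hr))

lemma cosh_mul_one_add_mul_sqVacVariance (hr : 0 ≤ r) (t : ℝ) :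
    Real.cosh t * (1 + (1 - Real.tanh t) * sqVacVariance r) =
      Real.exp r * Real.cosh (t - r) := by
  have htanh : Real.cosh t * Real.tanh t = Real.sinh t := by
    rw [Real.tanh_eq_sinh_div_cosh, mul_div_cancel₀ _ (Real.cosh_pos t).ne']
  calc Real.cosh t * (1 + (1 - Real.tanh t) * sqVacVariance r)
      = Real.cosh t + (Real.cosh t - Real.cosh t * Real.tanh t) * sqVacVariance r := by ring
    _ = Real.exp r * (Real.cosh t * (Real.exp (-r) + Real.sinh r) - Real.sinh t * Real.sinh r) := by
      rw [htanh, coe_sqVacVariance hr, Real.exp_neg]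
      field_simp
      ring
    _ = Real.exp r * Real.cosh (t - r) := by
      rw [← Real.cosh_sub_sinh, sub_add_cancel, Real.cosh_sub]

lemma one_add_sqVacVariance (hr : 0 ≤ r) :
    1 + (sqVacVariance r : ℝ) = Real.exp r * Real.cosh r := by
  simpa using cosh_mul_one_add_mul_sqVacVariance hr 0

lemma sqVacVariance_div_one_add (hr : 0 ≤ r) :
    (sqVacVariance r : ℝ) / (1 + sqVacVariance r) = Real.tanh r := by
  rw [one_add_sqVacVariance hr, coe_sqVacVariance hr, Real.tanh_eq_sinh_div_cosh,
    mul_div_mul_left _ _ (Real.exp_pos r).ne']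

/-- The coherent state `|iy⟩` on the imaginary axis. -/
def imagCoh (e : HilbertBasis ℕ ℂ H) (y : ℝ) : H := coh e (Complex.I * y)

/-- The Fock coefficient `⟨2m|ζ_r⟩` of the squeezed vacuum. -/
def sqVacCoeff (r : ℝ) (m : ℕ) : ℝ :=
  (-Real.tanh r) ^ m * Real.sqrt (Nat.factorial (2 * m)) / (2 ^ m * (Nat.factorial m : ℝ)) /
    Real.sqrt (Real.cosh r)

variable (e : HilbertBasis ℕ ℂ H)

omit [CompleteSpace H] in
lemma norm_imagCoh (y : ℝ) : ‖imagCoh e y‖ = 1 := norm_coh e _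

omit [CompleteSpace H] in
lemma stronglyMeasurable_imagCoh : StronglyMeasurable (imagCoh e) :=
  ((continuous_coh e).comp (by fun_prop : Continuous fun y : ℝ => Complex.I * y)).stronglyMeasurable

omit [CompleteSpace H] in
lemma integrable_imagCoh (μ : Measure ℝ) [IsFiniteMeasure μ] : Integrable (imagCoh e) μ :=
  .of_bound (stronglyMeasurable_imagCoh e).aestronglyMeasurable 1
    (ae_of_all _ fun y => (norm_imagCoh e y).le)

lemma sq_norm_I_mul (y : ℝ) : (‖Complex.I * y‖ : ℂ) ^ 2 = (y : ℂ) ^ 2 := by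
  rw [norm_mul, Complex.norm_I, one_mul, Complex.norm_real]
  exact_mod_cast sq_abs y

lemma cohCoeff_I_mul (y : ℝ) (m : ℕ) : cohCoeff (Complex.I * y) m =
    Complex.I ^ m / (√(m.factorial : ℝ) : ℂ) *
      ((Real.exp (-(1 / 2) * y ^ 2) * y ^ m : ℝ) : ℂ) := by
  rw [cohCoeff, sq_norm_I_mul, mul_pow]
  push_cast
  ring_nf

lemma inner_basis_integral_imagCoh (v : ℝ≥0) (m : ℕ) :
    ⟪e m, ∫ y, imagCoh e y ∂(gaussianReal 0 v)⟫ = Complex.I ^ m / (√(m.factorial : ℝ) : ℂ) *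
      (((√(1 + v))⁻¹ * ∫ y, y ^ m ∂(gaussianReal 0 (v / (1 + v))) : ℝ) : ℂ) := by
  have htilt := integral_exp_neg_mul_sq_smul_gaussianReal v 1 fun y => y ^ m
  simp only [NNReal.coe_one, one_mul, smul_eq_mul] at htilt
  rw [← integral_inner (integrable_imagCoh e _), ← htilt, ← integral_complex_ofReal,
    ← integral_const_mul]
  simp_rw [imagCoh, inner_basis_coh, cohCoeff_I_mul]

lemma inner_basis_two_mul_smul_integral_imagCoh (hr : 0 ≤ r) (k : ℕ) :
    ⟪e (2 * k), Real.exp (r / 2) • ∫ y, imagCoh e y ∂(gaussianReal 0 (sqVacVariance r))⟫ =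
      sqVacCoeff r k := by
  have hvar : ((sqVacVariance r / (1 + sqVacVariance r) : ℝ≥0) : ℝ) = Real.tanh r := by
    rw [NNReal.coe_div, NNReal.coe_add, NNReal.coe_one, sqVacVariance_div_one_add hr]
  have hsqrt : √(1 + sqVacVariance r) = Real.exp (r / 2) * √(Real.cosh r) := by
    rw [one_add_sqVacVariance hr, Real.sqrt_mul (Real.exp_pos r).le, Real.exp_half]
  have hfactorial : √((2 * k).factorial : ℝ) ^ 2 =
      (2 * k - 1).doubleFactorial * (2 ^ k * k.factorial) := by
    rw [Real.sq_sqrt (by positivity)]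
    exact_mod_cast factorial_two_mul_eq_doubleFactorial_mul k
  rw [inner_smul_right_eq_smul, inner_basis_integral_imagCoh, integral_pow_two_mul_gaussianReal,
    hvar, hsqrt, pow_mul, Complex.I_sq, Complex.real_smul, sqVacCoeff, neg_pow (Real.tanh r)]
  norm_cast
  have : 0 < √(Real.cosh r) := Real.sqrt_pos.2 (Real.cosh_pos r)
  have : 0 < √((2 * k).factorial : ℝ) := by positivity
  field_simp
  rw [hfactorial]
  push_cast
  ring

lemma inner_basis_two_mul_add_one_integral_imagCoh (v : ℝ≥0) (k : ℕ) :
    ⟪e (2 * k + 1), ∫ y, imagCoh e y ∂(gaussianReal 0 v)⟫ = 0 := by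
  rw [inner_basis_integral_imagCoh, integral_pow_two_mul_add_one_gaussianReal]
  simp

lemma hasSum_sqVacCoeff_smul_integral_imagCoh (hr : 0 ≤ r) :
    HasSum (fun m => (sqVacCoeff r m : ℂ) • e (2 * m))
      (Real.exp (r / 2) • ∫ y, imagCoh e y ∂(gaussianReal 0 (sqVacVariance r))) := by
  have hinj : Function.Injective fun m : ℕ => 2 * m := mul_right_injective₀ two_ne_zero
  have hsum := e.hasSum_repr
    (Real.exp (r / 2) • ∫ y, imagCoh e y ∂(gaussianReal 0 (sqVacVariance r)))
  simp_rw [e.repr_apply_apply] at hsum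
  rw [← hinj.hasSum_iff] at hsum
  · simpa only [Function.comp_def, inner_basis_two_mul_smul_integral_imagCoh e hr] using hsum
  · intro n hn
    obtain ⟨k, rfl | rfl⟩ := n.even_or_odd'
    · exact absurd ⟨k, rfl⟩ hn
    · rw [inner_smul_right_eq_smul, inner_basis_two_mul_add_one_integral_imagCoh, smul_zero,
        zero_smul]

lemma sqVac_eq_smul_integral_imagCoh (hr : 0 ≤ r) : sqVac e r =
    Real.exp (r / 2) • ∫ y, imagCoh e y ∂(gaussianReal 0 (sqVacVariance r)) :=
  (hasSum_sqVacCoeff_smul_integral_imagCoh e hr).tsum_eq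

lemma hasSum_sqVac (ht : 0 ≤ t) :
    HasSum (fun m => (sqVacCoeff t m : ℂ) • e (2 * m)) (sqVac e t) :=
  sqVac_eq_smul_integral_imagCoh e ht ▸ hasSum_sqVacCoeff_smul_integral_imagCoh e ht

lemma inner_coh_sqVac (ht : 0 ≤ t) (α : ℂ) :
    ⟪coh e α, sqVac e t⟫ = Complex.exp (-((‖α‖ : ℂ) ^ 2 / 2)) *
      Complex.exp (-(Real.tanh t : ℂ) * (starRingEnd ℂ α) ^ 2 / 2) / (√(Real.cosh t) : ℂ) := by
  refine ((hasSum_sqVac e ht).mapL (innerSL ℂ (coh e α))).unique ?_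
  have hexp := ((NormedSpace.expSeries_div_hasSum_exp
    (-(Real.tanh t : ℂ) * (starRingEnd ℂ α) ^ 2 / 2)).mul_left
      (Complex.exp (-((‖α‖ : ℂ) ^ 2 / 2)))).div_const (√(Real.cosh t) : ℂ)
  rw [← Complex.exp_eq_exp_ℂ] at hexp
  refine hexp.congr_fun fun m => ?_
  have hsqrt : (√((2 * m).factorial : ℝ) : ℂ) ≠ 0 := by
    exact_mod_cast (Real.sqrt_pos.2 (by positivity)).ne'
  rw [innerSL_apply_apply, inner_smul_right, ← inner_conj_symm, inner_basis_coh, cohCoeff,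
    sqVacCoeff]
  simp only [map_div₀, map_mul, map_pow, Complex.conj_ofReal, ← Complex.exp_conj, map_neg,
    Complex.conj_ofNat]
  rw [div_pow, mul_pow, ← pow_mul]
  push_cast
  field_simp

lemma norm_inner_coh_sqVac_sq_le (ht : 0 ≤ t) (α : ℂ) :
    ‖⟪coh e α, sqVac e t⟫‖ ^ 2 ≤ (Real.cosh t)⁻¹ := by
  have hre : (-(Real.tanh t : ℂ) * (starRingEnd ℂ α) ^ 2 / 2).re ≤ ‖α‖ ^ 2 / 2 := by
    refine (Complex.re_le_norm _).trans ?_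
    rw [norm_div, norm_mul, norm_pow, RCLike.norm_conj, norm_neg, Complex.norm_real,
      Complex.norm_ofNat]
    gcongr
    exact mul_le_of_le_one_left (by positivity) (Real.abs_tanh_lt_one t).le
  have hneg : (-((‖α‖ : ℂ) ^ 2 / 2)).re = -(‖α‖ ^ 2 / 2) := by norm_cast
  rw [inner_coh_sqVac e ht, ← Complex.exp_add, norm_div, div_pow, Complex.norm_real,
    Real.norm_of_nonneg (Real.sqrt_nonneg _), Real.sq_sqrt (Real.cosh_pos t).le, Complex.norm_exp,
    Complex.add_re, hneg, inv_eq_one_div]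
  have := Real.cosh_pos t
  gcongr
  exact pow_le_one₀ (Real.exp_pos _).le (Real.exp_le_one_iff.2 (by linarith))

lemma inner_sqVac_imagCoh (ht : 0 ≤ t) (y : ℝ) : ⟪sqVac e t, imagCoh e y⟫ =
    ((Real.exp (-((1 - Real.tanh t) / 2) * y ^ 2) / √(Real.cosh t) : ℝ) : ℂ) := by
  have hconj : (starRingEnd ℂ (Complex.I * y)) ^ 2 = -(y : ℂ) ^ 2 := by simp [mul_pow]
  have hexponent : -((y : ℂ) ^ 2 / 2) + -(Real.tanh t : ℂ) * -(y : ℂ) ^ 2 / 2 =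
      ((-((1 - Real.tanh t) / 2) * y ^ 2 : ℝ) : ℂ) := by push_cast; ring
  rw [← inner_conj_symm, imagCoh, inner_coh_sqVac e ht, sq_norm_I_mul, hconj, ← Complex.exp_add,
    hexponent, ← Complex.ofReal_exp, ← Complex.ofReal_div, Complex.conj_ofReal]

lemma inner_sqVac_sqVac (hr : 0 ≤ r) (ht : 0 ≤ t) :
    ⟪sqVac e t, sqVac e r⟫ = (((√(Real.cosh (t - r)))⁻¹ : ℝ) : ℂ) := by
  have htanh : 0 ≤ 1 - Real.tanh t := sub_nonneg.2 (Real.tanh_lt_one t).le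
  have htilt : ∫ y, Real.exp (-((1 - Real.tanh t) / 2) * y ^ 2)
      ∂(gaussianReal 0 (sqVacVariance r)) =
      (√(1 + (1 - Real.tanh t) * sqVacVariance r))⁻¹ := by
    have := integral_exp_neg_mul_sq_smul_gaussianReal (sqVacVariance r) (1 - Real.tanh t).toNNReal
      fun _ => (1 : ℝ)
    simpa only [Real.coe_toNNReal _ htanh, smul_eq_mul, mul_one, integral_const, probReal_univ]
      using this
  have hsqrt : √(Real.cosh t) * √(1 + (1 - Real.tanh t) * sqVacVariance r) =
      Real.exp (r / 2) * √(Real.cosh (t - r)) := by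
    rw [← Real.sqrt_mul (Real.cosh_pos t).le, cosh_mul_one_add_mul_sqVacVariance hr,
      Real.sqrt_mul (Real.exp_pos r).le, Real.exp_half]
  rw [sqVac_eq_smul_integral_imagCoh e hr, inner_smul_right_eq_smul,
    ← integral_inner (integrable_imagCoh e _)]
  simp_rw [inner_sqVac_imagCoh e ht]
  rw [integral_complex_ofReal, integral_div, htilt, Complex.real_smul, ← Complex.ofReal_mul,
    inv_div_left, hsqrt, mul_inv, mul_inv_cancel_left₀ (Real.exp_pos _).ne']

lemma norm_sqVac (hr : 0 ≤ r) : ‖sqVac e r‖ = 1 := by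
  have hinner := inner_sqVac_sqVac e hr hr
  rw [sub_self, Real.cosh_zero, Real.sqrt_one, inv_one, inner_self_eq_norm_sq_to_K] at hinner
  have hsq : ‖sqVac e r‖ ^ 2 = 1 := Complex.ofReal_injective (by simpa using hinner)
  exact (pow_eq_one_iff_of_nonneg (norm_nonneg _) two_ne_zero).1 hsq

end SqueezedVacuum

section RobustnessOfNonclassicality

open MeasureTheory ProbabilityTheory

variable {r t : ℝ}

omit [CompleteSpace H] in
lemma projv_real_smul (c : ℝ) (ψ : H) : projv (c • ψ) = c ^ 2 • projv ψ := by
  ext x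
  simp only [projv, ContinuousLinearMap.smulRight_apply, innerSL_apply_apply, smul_apply,
    inner_smul_left_eq_smul, smul_assoc, smul_comm _ c, sq, mul_smul]

lemma projv_sqVac_le (e : HilbertBasis ℕ ℂ H) (hr : 0 ≤ r) : projv (sqVac e r) ≤
    Real.exp r • ∫ y, projv (imagCoh e y) ∂(gaussianReal 0 (sqVacVariance r)) := by
  have hexp : Real.exp (r / 2) ^ 2 = Real.exp r := by rw [← Real.exp_nat_mul]; ring_nf
  rw [sqVac_eq_smul_integral_imagCoh e hr, projv_real_smul, hexp]
  exact smul_le_smul_of_nonneg_left (projv_integral_le_integral_projv (integrable_imagCoh e _)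
    (integrable_projv (stronglyMeasurable_imagCoh e) (norm_imagCoh e))) (Real.exp_pos r).le

lemma robustness_projv_sqVac_le (e : HilbertBasis ℕ ℂ H) (hr : 0 ≤ r) :
    Robustness e (ClassicalStates e) (projv (sqVac e r)) ≤ ENNReal.ofReal (Real.exp r) :=
  robustness_le_ofReal (isDensity_projv (norm_sqVac e hr))
    (isDensity_integral (integrable_projv (stronglyMeasurable_imagCoh e) (norm_imagCoh e))
      fun y => isDensity_projv (norm_imagCoh e y))
    (integral_projv_mem_tnClosure e (stronglyMeasurable_imagCoh e) (norm_imagCoh e)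
      fun y => ⟨Complex.I * y, rfl⟩)
    (Real.one_le_exp hr) (projv_sqVac_le e hr)

lemma re_inner_sqVac_le_of_mem_classicalStates (e : HilbertBasis ℕ ℂ H) (ht : 0 ≤ t) {A : Op H}
    (hA : A ∈ ClassicalStates e) (hAtc : A ∈ traceClass e) :
    (⟪sqVac e t, A (sqVac e t)⟫).re ≤ (Real.cosh t)⁻¹ := by
  refine re_inner_le_of_mem_tnClosure
    (mem_traceClass_and_re_inner_le_of_mem_convexHull ?_) hAtc hA
  rintro _ ⟨α, rfl⟩
  refine ⟨projv_mem_traceClass _, ?_⟩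
  rw [inner_projv_self, Complex.ofReal_re]
  exact norm_inner_coh_sqVac_sq_le e ht α

lemma ofReal_cosh_div_cosh_sub_le_robustness (e : HilbertBasis ℕ ℂ H) (hr : 0 ≤ r) (ht : 0 ≤ t) :
    ENNReal.ofReal (Real.cosh t / Real.cosh (t - r)) ≤
      Robustness e (ClassicalStates e) (projv (sqVac e r)) := by
  have hoverlap : (⟪sqVac e t, projv (sqVac e r) (sqVac e t)⟫).re = (Real.cosh (t - r))⁻¹ := by
    rw [inner_projv_self, Complex.ofReal_re, norm_inner_symm, inner_sqVac_sqVac e hr ht,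
      Complex.norm_real, Real.norm_eq_abs, sq_abs, inv_pow, Real.sq_sqrt (Real.cosh_pos _).le]
  have hle := ofReal_div_le_robustness (inv_pos.2 (Real.cosh_pos t))
    (projv_mem_traceClass (sqVac e r))
    fun A hA hAtc => re_inner_sqVac_le_of_mem_classicalStates e ht hA hAtc
  rwa [hoverlap, div_inv_eq_mul, inv_mul_eq_div] at hle

lemma tendsto_cosh_div_cosh_sub (r : ℝ) :
    Tendsto (fun t => Real.cosh t / Real.cosh (t - r)) atTop (nhds (Real.exp r)) := by
  have hrescale (s t : ℝ) :
      Real.cosh (t - s) * Real.exp (-t) =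
        (Real.exp (-s) + Real.exp s * Real.exp (-(2 * t))) / 2 := by
    rw [Real.cosh_eq, div_mul_eq_mul_div, add_mul, ← Real.exp_add, ← Real.exp_add, ← Real.exp_add]
    ring_nf
  have hdecay : Tendsto (fun t : ℝ => Real.exp (-(2 * t))) atTop (nhds 0) :=
    Real.tendsto_exp_neg_atTop_nhds_zero.comp (tendsto_id.const_mul_atTop two_pos)
  have hlim (s : ℝ) : Tendsto (fun t => Real.cosh (t - s) * Real.exp (-t)) atTop
      (nhds (Real.exp (-s) / 2)) := by
    simp_rw [hrescale]
    simpa using ((hdecay.const_mul (Real.exp s)).const_add (Real.exp (-s))).div_const 2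
  have hquot := (hlim 0).div (hlim r) (by positivity)
  rw [neg_zero, Real.exp_zero, div_div_div_cancel_right₀ two_ne_zero, Real.exp_neg, one_div,
    inv_inv] at hquot
  refine hquot.congr fun t => ?_
  rw [Pi.div_apply, sub_zero, mul_div_mul_right _ _ (Real.exp_pos _).ne']

lemma ofReal_exp_le_robustness (e : HilbertBasis ℕ ℂ H) (hr : 0 ≤ r) :
    ENNReal.ofReal (Real.exp r) ≤ Robustness e (ClassicalStates e) (projv (sqVac e r)) :=
  le_of_tendsto (ENNReal.tendsto_ofReal (tendsto_cosh_div_cosh_sub r)) <|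
    (eventually_ge_atTop 0).mono fun _ ht => ofReal_cosh_div_cosh_sub_le_robustness e hr ht

end RobustnessOfNonclassicality

/-- the generalized robustness of nonclassicality of the squeezed vacuum is
`R_C(ζ_r) = e^r` for all `r ≥ 0`. -/
theorem robustness_nonclassicality_squeezed (e : HilbertBasis ℕ ℂ H) (r : ℝ) (hr : 0 ≤ r) :
    Robustness e (ClassicalStates e) (projv (sqVac e r)) = ENNReal.ofReal (Real.exp r) :=
  le_antisymm (robustness_projv_sqVac_le e hr) (ofReal_exp_le_robustness e hr)
end
end

section
/- The Hilbert matrix operator H₋₁ with entries (H₋₁)_{n,m} = 1/(n−m) for n ≠ m and 0 for n = m (n,m ≥ 1) defines a bounded operator on ℓ²(ℕ) with operator norm at most π, so ω_± = (1/c) D(𝟙 ± (i/π)H₋₁) D are positive trace-class operators, where D = Σ_{n≥1} (1/(√n ln(n+1)))|n⟩⟨n| and c = Tr[D²]. -/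
/-!
Multiplication by the sawtooth `φ(x) = π i (1 - 2 x)` on `L²(ℝ/ℤ)` has norm at most `sup |φ| = π`,
and since the Fourier coefficients of `φ` are `1 / n` (and `0` at `n = 0`), its compression to the
characters of nonnegative frequency is the Hilbert matrix `H₋₁`. So `±(i/π) H₋₁` is a self-adjoint
contraction with zero diagonal: `𝟙 ± (i/π) H₋₁` is positive, and conjugating it by `D` gives a
positive operator with the same diagonal as `D²`, whose sum converges by Cauchy condensation.
-/

noncomputable section
open scoped ENNReal ComplexOrder
open Filter

variable {H : Type} [NormedAddCommGroup H] [InnerProductSpace ℂ H] [CompleteSpace H]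

local notation "⟪" x ", " y "⟫" => @inner ℂ _ _ x y

section LogSeries

theorem summable_nat_mul_log_pow_inv {p : ℕ} :
    Summable (fun n : ℕ => ((n : ℝ) * Real.log n ^ p)⁻¹) ↔ 1 < p := by
  have antitone : ∀ᶠ n : ℕ in atTop,
      (((n + 1 : ℕ) : ℝ) * Real.log (n + 1 : ℕ) ^ p)⁻¹ ≤ ((n : ℝ) * Real.log n ^ p)⁻¹ := by
    filter_upwards [eventually_gt_atTop 1] with n hn
    have hn' : (1 : ℝ) < n := by exact_mod_cast hn
    have hlog : 0 < Real.log n := Real.log_pos hn'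
    gcongr <;> simp
  have condensed (k : ℕ) : (2 : ℝ) ^ k * (((2 ^ k : ℕ) : ℝ) * Real.log (2 ^ k : ℕ) ^ p)⁻¹ =
      (Real.log 2 ^ p)⁻¹ * ((k : ℝ) ^ p)⁻¹ := by
    push_cast
    rw [Real.log_pow, mul_pow]
    field_simp
  have hlog2 : (Real.log 2 ^ p)⁻¹ ≠ 0 := by positivity
  rw [← summable_condensed_iff_of_eventually_nonneg (.of_forall fun n => by positivity) antitone]
  simp only [condensed]
  rw [summable_mul_left_iff hlog2, Real.summable_nat_pow_inv]

theorem summable_sqrt_mul_log_inv_sq :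
    Summable (fun n : ℕ => ((Real.sqrt (n + 1) * Real.log (n + 2))⁻¹) ^ 2) := by
  have shifted : Summable fun n : ℕ => 2 * (((n + 2 : ℕ) : ℝ) * Real.log (n + 2 : ℕ) ^ 2)⁻¹ :=
    ((summable_nat_add_iff 2).2 (summable_nat_mul_log_pow_inv.2 one_lt_two)).mul_left 2
  refine shifted.of_nonneg_of_le (fun n => sq_nonneg _) fun n => ?_
  have hlog : 0 < Real.log ((n : ℝ) + 2) := Real.log_pos (by linarith [n.cast_nonneg (α := ℝ)])
  calc ((Real.sqrt (n + 1) * Real.log (n + 2))⁻¹) ^ 2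
      = (((n : ℝ) + 1) * Real.log (n + 2) ^ 2)⁻¹ := by
        rw [inv_pow, mul_pow, Real.sq_sqrt (by positivity)]
    _ ≤ (((n : ℝ) + 2) / 2 * Real.log (n + 2) ^ 2)⁻¹ := by
        gcongr
        linarith [n.cast_nonneg (α := ℝ)]
    _ = 2 * (((n + 2 : ℕ) : ℝ) * Real.log (n + 2 : ℕ) ^ 2)⁻¹ := by
        push_cast
        field_simp

end LogSeries

section HilbertBasis

variable {𝕜 ι E F : Type*} [RCLike 𝕜]
  [NormedAddCommGroup E] [InnerProductSpace 𝕜 E]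
  [NormedAddCommGroup F] [InnerProductSpace 𝕜 F]

theorem clm_ext_of_inner_basis (e : HilbertBasis ι 𝕜 E) {A B : E →L[𝕜] E}
    (h : ∀ i j, inner 𝕜 (e i) (A (e j)) = inner 𝕜 (e i) (B (e j))) : A = B := by
  refine ContinuousLinearMap.ext_on
    (Submodule.dense_iff_topologicalClosure_eq_top.2 e.dense_span) ?_
  rintro _ ⟨j, rfl⟩
  refine e.repr.injective (lp.ext (funext fun i => ?_))
  simpa only [e.repr_apply_apply] using h i j

theorem isSelfAdjoint_of_inner_basis [CompleteSpace E] (e : HilbertBasis ι 𝕜 E) {A : E →L[𝕜] E}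
    (h : ∀ i j, inner 𝕜 (e i) (A (e j)) = starRingEnd 𝕜 (inner 𝕜 (e j) (A (e i)))) :
    IsSelfAdjoint A := by
  refine clm_ext_of_inner_basis e fun i j => ?_
  rw [ContinuousLinearMap.star_eq_adjoint, ContinuousLinearMap.adjoint_inner_right,
    ← inner_conj_symm, h i j]

theorem inner_apply_basis_of_diagonal [DecidableEq ι] (e : HilbertBasis ι 𝕜 E) {D : E →L[𝕜] E}
    {d : ι → 𝕜} (hD : ∀ i, D (e i) = d i • e i) (i j : ι) :
    inner 𝕜 (e i) (D (e j)) = if i = j then d i else 0 := by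
  rw [hD, inner_smul_right, orthonormal_iff_ite.1 e.orthonormal]
  split_ifs with h <;> simp [h]

theorem isSelfAdjoint_of_real_diagonal [CompleteSpace E] (e : HilbertBasis ι 𝕜 E) {D : E →L[𝕜] E}
    {d : ι → ℝ} (hD : ∀ i, D (e i) = (d i : 𝕜) • e i) : IsSelfAdjoint D := by
  classical
  refine isSelfAdjoint_of_inner_basis e fun i j => ?_
  rw [inner_apply_basis_of_diagonal e hD, inner_apply_basis_of_diagonal e hD]
  rcases eq_or_ne i j with rfl | h
  · simp
  · simp [h, h.symm]

/-- The operator that is diagonal in the Hilbert basis `e`, with the bounded family `d` as its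
eigenvalues. -/
def diagonalOp (e : HilbertBasis ι 𝕜 E) (d : lp (fun _ : ι => 𝕜) ∞) : E →L[𝕜] E :=
  e.repr.symm.toContinuousLinearEquiv.toContinuousLinearMap ∘L
    lp.mapCLM 2 (fun i => d i • ContinuousLinearMap.id 𝕜 𝕜) (norm_nonneg d) (fun i => by
      simpa [norm_smul] using lp.norm_apply_le_norm ENNReal.top_ne_zero d i) ∘L
    e.repr.toContinuousLinearEquiv.toContinuousLinearMap

theorem diagonalOp_apply_basis (e : HilbertBasis ι 𝕜 E) (d : lp (fun _ : ι => 𝕜) ∞) (i : ι) :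
    diagonalOp e d (e i) = d i • e i := by
  classical
  apply e.repr.injective
  ext j
  by_cases h : j = i <;> simp [diagonalOp, e.repr_self, lp.single_apply, h]

theorem memℓp_top_ofReal_of_summable_sq {w : ι → ℝ} (hw : Summable fun i => w i ^ 2) :
    Memℓp (fun i => (w i : 𝕜)) ∞ := by
  have hw2 : Memℓp (fun i => (w i : 𝕜)) 2 := memℓp_gen (by simpa using hw)
  exact hw2.of_exponent_ge le_top

/-- The isometry carrying the Hilbert basis `e` to the orthonormal family `v`. -/
def basisIsometry [CompleteSpace F] (e : HilbertBasis ι 𝕜 E) {v : ι → F} (hv : Orthonormal 𝕜 v) :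
    E →ₗᵢ[𝕜] F :=
  hv.orthogonalFamily.linearIsometry.comp e.repr.toLinearIsometry

theorem basisIsometry_apply_basis [CompleteSpace F] (e : HilbertBasis ι 𝕜 E) {v : ι → F}
    (hv : Orthonormal 𝕜 v) (i : ι) : basisIsometry e hv (e i) = v i := by
  classical
  simp [basisIsometry, e.repr_self, LinearIsometry.toSpanSingleton_apply]

end HilbertBasis

section Toeplitz

open MeasureTheory AddCircle

variable {T : ℝ} [hT : Fact (0 < T)] {ι E : Type*}
  [NormedAddCommGroup E] [InnerProductSpace ℂ E] [CompleteSpace E]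

/-- Multiplication by `φ ∈ L^∞` on `L²` of the circle. -/
def mulL2 (φ : Lp ℂ ∞ (haarAddCircle (T := T))) :
    Lp ℂ 2 (haarAddCircle (T := T)) →L[ℂ] Lp ℂ 2 (haarAddCircle (T := T)) :=
  (ContinuousLinearMap.mul ℂ ℂ).holderL haarAddCircle ∞ 2 2 φ

theorem norm_mulL2_le (φ : Lp ℂ ∞ (haarAddCircle (T := T))) : ‖mulL2 φ‖ ≤ ‖φ‖ :=
  ContinuousLinearMap.le_of_opNorm_le _
    ((ContinuousLinearMap.norm_holderL_le _).trans (ContinuousLinearMap.opNorm_mul_le ℂ ℂ)) φ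
    |>.trans_eq (one_mul _)

theorem inner_fourierLp_mulL2_fourierLp (φ : Lp ℂ ∞ (haarAddCircle (T := T))) (n m : ℤ) :
    ⟪fourierLp (T := T) 2 n, mulL2 φ (fourierLp 2 m)⟫ = fourierCoeff φ (n - m) := by
  rw [L2.inner_def, fourierCoeff]
  refine integral_congr_ae ?_
  filter_upwards [(ContinuousLinearMap.mul ℂ ℂ).coeFn_holder (r := 2) φ (fourierLp 2 m),
    coeFn_fourierLp (T := T) 2 n, coeFn_fourierLp (T := T) 2 m] with x hφ hn hm
  have hφ' : mulL2 φ (fourierLp 2 m) x = φ x * fourier m x := by rw [← hm]; exact hφ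
  rw [hφ', hn, neg_sub, sub_eq_add_neg, fourier_add, fourier_neg, RCLike.inner_apply, smul_eq_mul]
  ring

/-- The compression of multiplication by `φ` to the closed span of the characters `k i`, `i : ι`,
transported to `E` by `e i ↦ fourier (k i)`. For `k : ℕ ↪ ℤ` the inclusion this is the classical
Toeplitz operator with symbol `φ`. -/
def toeplitzOp (e : HilbertBasis ι ℂ E) (k : ι ↪ ℤ) (φ : Lp ℂ ∞ (haarAddCircle (T := T))) :
    E →L[ℂ] E :=
  let V := (basisIsometry e (orthonormal_fourier.comp k k.injective)).toContinuousLinearMap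
  ContinuousLinearMap.adjoint V ∘L mulL2 φ ∘L V

theorem norm_toeplitzOp_le (e : HilbertBasis ι ℂ E) (k : ι ↪ ℤ)
    (φ : Lp ℂ ∞ (haarAddCircle (T := T))) : ‖toeplitzOp e k φ‖ ≤ ‖φ‖ := by
  set V := (basisIsometry e
    ((orthonormal_fourier (T := T)).comp k k.injective)).toContinuousLinearMap
  have hV : ‖V‖ ≤ 1 := LinearIsometry.norm_toContinuousLinearMap_le _
  have hV' : ‖ContinuousLinearMap.adjoint V‖ ≤ 1 := by rwa [LinearIsometryEquiv.norm_map]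
  calc ‖ContinuousLinearMap.adjoint V ∘L mulL2 φ ∘L V‖
      ≤ ‖ContinuousLinearMap.adjoint V‖ * (‖mulL2 φ‖ * ‖V‖) := by
        grw [ContinuousLinearMap.opNorm_comp_le, ContinuousLinearMap.opNorm_comp_le]
    _ ≤ 1 * (‖φ‖ * 1) := by grw [hV, hV', norm_mulL2_le]
    _ = ‖φ‖ := by ring

theorem inner_toeplitzOp (e : HilbertBasis ι ℂ E) (k : ι ↪ ℤ)
    (φ : Lp ℂ ∞ (haarAddCircle (T := T))) (i j : ι) :
    ⟪e i, toeplitzOp e k φ (e j)⟫ = fourierCoeff φ (k i - k j) := by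
  simp only [toeplitzOp, ContinuousLinearMap.comp_apply, ContinuousLinearMap.adjoint_inner_right,
    LinearIsometry.coe_toContinuousLinearMap, basisIsometry_apply_basis, Function.comp_apply,
    inner_fourierLp_mulL2_fourierLp]

end Toeplitz

section Sawtooth

open MeasureTheory AddCircle

theorem measurable_liftIco {T : ℝ} [Fact (0 < T)] {B : Type*} [MeasurableSpace B] (a : ℝ)
    {f : ℝ → B} (hf : Measurable f) : Measurable (AddCircle.liftIco T a f) :=
  (hf.comp measurable_subtype_coe).comp (AddCircle.measurableEquivIco T a).measurable

theorem abs_periodizedBernoulli_one_le (x : UnitAddCircle) : |periodizedBernoulli 1 x| ≤ 1 / 2 := by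
  obtain ⟨y, hy, rfl⟩ : ∃ y ∈ Set.Ico (0 : ℝ) (0 + 1), (y : UnitAddCircle) = x :=
    ⟨_, (AddCircle.equivIco 1 0 x).2, AddCircle.coe_equivIco⟩
  rw [periodizedBernoulli, AddCircle.liftIco_coe_apply hy, bernoulliFun_one, abs_le]
  constructor <;> linarith [hy.1, hy.2]

theorem norm_two_pi_I_mul_periodizedBernoulli_one_le (x : UnitAddCircle) :
    ‖-(2 * Real.pi * Complex.I) * (periodizedBernoulli 1 x : ℂ)‖ ≤ Real.pi := by
  calc ‖-(2 * Real.pi * Complex.I) * (periodizedBernoulli 1 x : ℂ)‖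
      = 2 * Real.pi * |periodizedBernoulli 1 x| := by simp [abs_of_pos Real.pi_pos]
    _ ≤ 2 * Real.pi * (1 / 2) := by grw [abs_periodizedBernoulli_one_le x]
    _ = Real.pi := by ring

theorem memLp_two_pi_I_mul_periodizedBernoulli_one :
    MemLp (fun x : UnitAddCircle => -(2 * Real.pi * Complex.I) * (periodizedBernoulli 1 x : ℂ))
      ∞ haarAddCircle :=
  have hB : Measurable (periodizedBernoulli 1) :=
    measurable_liftIco 0 (continuous_bernoulliFun 1).measurable
  memLp_top_of_bound ((Complex.measurable_ofReal.comp hB).const_mul _).aestronglyMeasurable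
    Real.pi (.of_forall norm_two_pi_I_mul_periodizedBernoulli_one_le)

/-- The symbol of the Hilbert matrix: the sawtooth `x ↦ π i (1 - 2 x)` for `x ∈ [0, 1)`, written
through the first Bernoulli function `x - 1 / 2`. -/
def sawtooth : Lp ℂ ∞ (haarAddCircle (T := 1)) :=
  memLp_two_pi_I_mul_periodizedBernoulli_one.toLp

theorem norm_sawtooth_le : ‖sawtooth‖ ≤ Real.pi := by
  rw [sawtooth, Lp.norm_toLp, eLpNorm_exponent_top]
  exact ENNReal.toReal_le_of_le_ofReal Real.pi_pos.le <| eLpNormEssSup_le_of_ae_bound <|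
    .of_forall norm_two_pi_I_mul_periodizedBernoulli_one_le

-- Both sides vanish at `n = 0`, where Lean's inverse is `0`.
theorem fourierCoeff_sawtooth (n : ℤ) : fourierCoeff sawtooth n = (n : ℂ)⁻¹ := by
  rw [sawtooth, fourierCoeff_congr_ae (MemLp.coeFn_toLp _), fourierCoeff.const_mul]
  have hB := fourierCoeff_bernoulli_eq one_ne_zero n
  simp only [Function.comp_def] at hB
  rw [hB]
  have hpi : (Real.pi : ℂ) ≠ 0 := mod_cast Real.pi_ne_zero
  rcases eq_or_ne n 0 with rfl | hn
  · simp
  · field_simp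
    simp

end Sawtooth

section HilbertMatrix

variable {ι E : Type*} [NormedAddCommGroup E] [InnerProductSpace ℂ E] [CompleteSpace E]

/-- The skew-symmetric Hilbert matrix `1 / (k i - k j)`, with zero diagonal, whose rows and columns
are labelled by distinct integers `k i`. The matrix `H₋₁` has `k n = n` for `n : ℕ`. -/
def hilbertMatrixOp (e : HilbertBasis ι ℂ E) (k : ι ↪ ℤ) : E →L[ℂ] E :=
  toeplitzOp e k sawtooth

theorem norm_hilbertMatrixOp_le (e : HilbertBasis ι ℂ E) (k : ι ↪ ℤ) :
    ‖hilbertMatrixOp e k‖ ≤ Real.pi :=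
  (norm_toeplitzOp_le e k sawtooth).trans norm_sawtooth_le

theorem inner_hilbertMatrixOp (e : HilbertBasis ι ℂ E) (k : ι ↪ ℤ) (i j : ι) :
    ⟪e i, hilbertMatrixOp e k (e j)⟫ = ((((k i : ℝ) - k j)⁻¹ : ℝ) : ℂ) := by
  rw [hilbertMatrixOp, inner_toeplitzOp, fourierCoeff_sawtooth]
  push_cast
  rfl

theorem isSelfAdjoint_I_smul_hilbertMatrixOp (e : HilbertBasis ι ℂ E) (k : ι ↪ ℤ) :
    IsSelfAdjoint (Complex.I • hilbertMatrixOp e k) := by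
  refine isSelfAdjoint_of_inner_basis e fun i j => ?_
  simp only [smul_apply, inner_smul_right, inner_hilbertMatrixOp, map_mul, Complex.conj_I,
    Complex.conj_ofReal]
  rw [← neg_sub (k j : ℝ), inv_neg]
  push_cast
  ring

end HilbertMatrix

section Density

theorem one_add_nonneg_of_norm_le_one {A : Type*} [CStarAlgebra A] [PartialOrder A]
    [StarOrderedRing A] {a : A} (ha : IsSelfAdjoint a) (hnorm : ‖a‖ ≤ 1) : 0 ≤ 1 + a := by
  have hle : algebraMap ℝ A ‖a‖ ≤ 1 := by
    simpa using algebraMap_mono A hnorm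
  exact neg_le_iff_add_nonneg'.1 ((neg_le_neg hle).trans ha.neg_algebraMap_norm_le_self)

variable {ι : Type} (e : HilbertBasis ι ℂ H)

omit [CompleteSpace H] in
theorem isDensity_inv_smul {T : Op H} (hT : T.IsPositive) {t : ℝ} (ht : t ≠ 0)
    (hsum : HasSum (fun i => ⟪e i, T (e i)⟫) (t : ℂ)) : IsDensity e (t⁻¹ • T) := by
  have hentry (i : ι) : ⟪e i, (t⁻¹ • T) (e i)⟫ = ((t⁻¹ : ℝ) : ℂ) * ⟪e i, T (e i)⟫ := by
    rw [smul_apply, ← Complex.coe_smul, inner_smul_right]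
  have htrace : HasSum (fun i => ⟪e i, (t⁻¹ • T) (e i)⟫) 1 := by
    have hscaled := hsum.mul_left ((t⁻¹ : ℝ) : ℂ)
    rw [← Complex.ofReal_mul, inv_mul_cancel₀ ht, Complex.ofReal_one] at hscaled
    simpa only [hentry] using hscaled
  have ht0 : (0 : ℂ) ≤ t := hsum.nonneg fun i => hT.inner_nonneg_right (e i)
  refine ⟨?_, Complex.reCLM.summable htrace.summable, htrace.tsum_eq⟩
  rw [← Complex.coe_smul]
  exact hT.smul_of_nonneg (by simpa using ht0)

theorem inner_diagonal_conj_one_add {D A : Op H} {w : ι → ℝ}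
    (hD : ∀ i, D (e i) = (w i : ℂ) • e i) (hdiag : ∀ i, ⟪e i, A (e i)⟫ = 0) (i : ι) :
    ⟪e i, (D ∘L (1 + A) ∘L D) (e i)⟫ = ((w i ^ 2 : ℝ) : ℂ) := by
  calc ⟪e i, D ((1 + A) (D (e i)))⟫
      = ⟪D (e i), (1 + A) (D (e i))⟫ :=
        ((isSelfAdjoint_of_real_diagonal e hD).isSymmetric _ _).symm
    _ = ((w i ^ 2 : ℝ) : ℂ) := by
        rw [hD, map_smul, inner_smul_left, inner_smul_right, add_apply, inner_add_right, hdiag,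
          one_apply_eq_self, inner_self_eq_one_of_norm_eq_one (e.orthonormal.1 i)]
        simp [sq]

theorem isDensity_diagonal_conj_one_add {D A : Op H} {w : ι → ℝ}
    (hw : Summable fun i => w i ^ 2) (hw0 : w ≠ 0) (hD : ∀ i, D (e i) = (w i : ℂ) • e i)
    (hA : IsSelfAdjoint A) (hnorm : ‖A‖ ≤ 1) (hdiag : ∀ i, ⟪e i, A (e i)⟫ = 0) :
    IsDensity e ((∑' i, w i ^ 2)⁻¹ • (D ∘L (1 + A) ∘L D)) := by
  have hpos : (D ∘L (1 + A) ∘L D).IsPositive := by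
    have h1A : (1 + A).IsPositive :=
      (ContinuousLinearMap.nonneg_iff_isPositive _).1 (one_add_nonneg_of_norm_le_one hA hnorm)
    simpa only [(isSelfAdjoint_of_real_diagonal e hD).adjoint_eq] using h1A.conj_adjoint D
  obtain ⟨i, hi⟩ := Function.ne_iff.1 hw0
  have htsum : 0 < ∑' i, w i ^ 2 := hw.tsum_pos (fun i => sq_nonneg (w i)) i (sq_pos_of_ne_zero hi)
  refine isDensity_inv_smul e hpos htsum.ne' ?_
  simpa only [inner_diagonal_conj_one_add e hD hdiag] using Complex.hasSum_ofReal.2 hw.hasSum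

end Density

theorem hilbert_matrix_states_general {ι : Type} [DecidableEq ι] (e : HilbertBasis ι ℂ H)
    (k : ι ↪ ℤ) {w : ι → ℝ} (hw : Summable fun i => w i ^ 2) (hw0 : w ≠ 0) :
    ∃ Hm D : Op H,
      (∀ i j, ⟪e i, Hm (e j)⟫ = if i = j then 0 else ((((k i : ℝ) - k j)⁻¹ : ℝ) : ℂ)) ∧
      ‖Hm‖ ≤ Real.pi ∧
      (∀ i j, ⟪e i, D (e j)⟫ = if i = j then (w i : ℂ) else 0) ∧
      ∀ s : ℝ, |s| ≤ 1 → IsDensity e ((∑' i, w i ^ 2)⁻¹ •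
        (D ∘L (ContinuousLinearMap.id ℂ H + (s / Real.pi) • (Complex.I • Hm)) ∘L D)) := by
  have hD := diagonalOp_apply_basis e ⟨_, memℓp_top_ofReal_of_summable_sq hw⟩
  refine ⟨hilbertMatrixOp e k, _, fun i j => ?_, norm_hilbertMatrixOp_le e k,
    inner_apply_basis_of_diagonal e hD, fun s hs => ?_⟩
  · rw [inner_hilbertMatrixOp]
    split_ifs with hij <;> simp [hij]
  have hnorm : ‖(s / Real.pi) • (Complex.I • hilbertMatrixOp e k)‖ ≤ 1 :=
    calc ‖(s / Real.pi) • (Complex.I • hilbertMatrixOp e k)‖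
        = |s| / Real.pi * ‖hilbertMatrixOp e k‖ := by
          simp [norm_smul, abs_of_pos Real.pi_pos]
      _ ≤ 1 / Real.pi * Real.pi := by grw [hs, norm_hilbertMatrixOp_le]
      _ = 1 := one_div_mul_cancel Real.pi_ne_zero
  refine isDensity_diagonal_conj_one_add e hw hw0 hD
    ((IsSelfAdjoint.all (s / Real.pi)).smul (isSelfAdjoint_I_smul_hilbertMatrixOp e k)) hnorm
    fun i => ?_
  rw [smul_apply, smul_apply, ← Complex.coe_smul, inner_smul_right, inner_smul_right,
    inner_hilbertMatrixOp]
  simp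

/-- the Hilbert matrix `(H₋₁)ₙₘ = 1/(n - m)` (off-diagonal, skew-symmetric) is a
bounded operator of norm at most `π`, and `ω± = c⁻¹ D(𝟙 ± (i/π)H₋₁)D` with
`D = diag(1/(√n ln(n+1)))`, `c = Tr D²`, are positive trace-class operators of unit trace.
(Indices are shifted so that the `ℕ`-indexed basis vector `e n` is `|n+1⟩`.) -/
theorem hilbert_matrix_states (e : HilbertBasis ℕ ℂ H)
    (c : ℝ) (hc : c = ∑' n : ℕ, ((Real.sqrt (n + 1) * Real.log (n + 2))⁻¹) ^ 2) :
    ∃ Hm D : Op H,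
      (∀ n m : ℕ, ⟪e n, Hm (e m)⟫ =
        if n = m then 0 else ((((n : ℝ) - (m : ℝ))⁻¹ : ℝ) : ℂ)) ∧
      ‖Hm‖ ≤ Real.pi ∧
      (∀ n m : ℕ, ⟪e n, D (e m)⟫ =
        if n = m then (((Real.sqrt (n + 1) * Real.log (n + 2))⁻¹ : ℝ) : ℂ) else 0) ∧
      (∀ s : ℝ, s = 1 ∨ s = -1 →
        ∀ ω : Op H,
          ω = (c⁻¹ : ℝ) •
            (D ∘L (ContinuousLinearMap.id ℂ H + (s / Real.pi) • (Complex.I • Hm)) ∘L D) →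
          ω.IsPositive ∧ Summable (fun n : ℕ => (⟪e n, ω (e n)⟫).re) ∧ trB e ω = 1) := by
  obtain ⟨Hm, D, hH, hnorm, hD, hω⟩ := hilbert_matrix_states_general e Nat.castEmbedding
    summable_sqrt_mul_log_inv_sq (Function.ne_iff.2 ⟨0, by norm_num⟩)
  refine ⟨Hm, D, by simpa using hH, hnorm, hD, fun s hs ω h => ?_⟩
  exact h ▸ hc ▸ hω s (by rcases hs with rfl | rfl <;> simp)
end
end
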